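/- arXiv:1710.07261 — 3 statements merged into one kernel-verified Lean document; each statement's English description precedes it below -/
import Mathlib

section
/- Let k, l ≥ 2 be multiplicatively independent integers. Let a be a k-automatic sequence and b an l-automatic sequence, both with values in a finite totally ordered set Ω. Suppose ℒ(a) = ℒ(b) and that a and b are both uniformly recurrent. Then a and b are periodic. (One may assume as input the theorem of Allouche–Rampersad–Shallit: for any k-automatic sequence a with values in a finite ordered set, the sequence min(a) is k-automatic; and the Morse–Hedlund-type fact that a sequence whose number of factors of each length n is bounded independently of n is ultimately periodic.) -/
open Filter

/-- The upper density of a set of natural numbers: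
`limsup_{n → ∞} |A ∩ [0,n)| / n`. -/
noncomputable def upperDensity (A : Set ℕ) : ℝ :=
  limsup (fun n : ℕ => (Nat.card ↥(A ∩ Set.Iio n) : ℝ) / n) atTop

/-- The base-`k` representation of `n` as a word over `Σ_k = Fin k`, read starting
from the leading digit, with no leading zeros (junk value `[]` if `k ≤ 1`;
the representation of `0` is the empty word). -/
def kRepr (k n : ℕ) : List (Fin k) :=
  if h : 1 < k then
    (Nat.digits k n).reverse.pmap (fun d hd => (⟨d, hd⟩ : Fin k))
      (fun d hd => Nat.digits_lt_base h (List.mem_reverse.mp hd))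
  else []

/-- Run a deterministic automaton with transition function `δ` from the state `s`
on the word `w`, reading `w` from the left: the extended transition function `δ*`. -/
def run {S : Type*} {k : ℕ} (δ : S → Fin k → S) (s : S) (w : List (Fin k)) : S :=
  w.foldl δ s

/-- A sequence `a : ℕ → Ω` is `k`-automatic if it is produced by a deterministic
finite automaton with output, reading the base-`k` representation of the input
starting from the leading digit. -/
def IsAutomatic {Ω : Type*} (k : ℕ) (a : ℕ → Ω) : Prop :=
  ∃ (S : Type) (_ : Fintype S) (δ : S → Fin k → S) (s₀ : S) (τ : S → Ω),
    ∀ n : ℕ, a n = τ (run δ s₀ (kRepr k n))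

/-- Two integers are multiplicatively independent if no nontrivial powers of them
coincide (equivalently, they are not both powers of a common integer). -/
def MultIndep (k l : ℕ) : Prop :=
  ∀ i j : ℕ, k ^ i = l ^ j → i = 0 ∧ j = 0

/-- The finite word `w` occurs in the sequence `a` at position `i`. -/
def OccursAt {Ω : Type*} (a : ℕ → Ω) (w : List Ω) (i : ℕ) : Prop :=
  ∀ (j : ℕ) (h : j < w.length), w.get ⟨j, h⟩ = a (i + j)

/-- The finite word `w` is a factor of the sequence `a`. -/
def IsFactor {Ω : Type*} (a : ℕ → Ω) (w : List Ω) : Prop :=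
  ∃ i : ℕ, OccursAt a w i

/-- A sequence is uniformly recurrent if each of its factors occurs in it with
bounded gaps. -/
def UniformlyRecurrent {Ω : Type*} (a : ℕ → Ω) : Prop :=
  ∀ w : List Ω, IsFactor a w →
    ∃ C : ℕ, ∀ N : ℕ, ∃ i : ℕ, N ≤ i ∧ i ≤ N + C ∧ OccursAt a w i

/-- A strongly connected component of an automaton: a nonempty set of states closed
under all transitions and such that each of its states can be reached from each
other one by some word. -/
def IsSCC {S : Type*} {k : ℕ} (δ : S → Fin k → S) (C : Set S) : Prop :=
  C.Nonempty ∧ (∀ s ∈ C, ∀ u : Fin k, δ s u ∈ C) ∧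
    ∀ s ∈ C, ∀ s' ∈ C, ∃ w : List (Fin k), run δ s w = s'

/-- The prefix of length `n` of the sequence `c`. -/
def prefixWord {Ω : Type*} (c : ℕ → Ω) (n : ℕ) : List Ω :=
  (List.range n).map c

/-- `c` is the infinite word `min(a)`: for each `n`, the prefix of `c` of length `n`
is the lexicographically least factor of `a` of length `n`. -/
def IsMinWord {Ω : Type*} [LinearOrder Ω] (a c : ℕ → Ω) : Prop :=
  ∀ n : ℕ, IsFactor a (prefixWord c n) ∧
    ∀ w : List Ω, w.length = n → IsFactor a w → ¬ List.Lex (· < ·) w (prefixWord c n)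

/-!
By minimality, a sequence `c` all of whose factors are factors of the uniformly recurrent `a` has
the same factors as `a` and is uniformly recurrent too. For `c = min(a) = min(b)`, which is both
`k`- and `l`-automatic by Allouche–Rampersad–Shallit, it remains to prove Cobham's theorem for
uniformly recurrent sequences; the period of `c` then passes to `a` and `b`.

By the pigeonhole principle, the states of both automata agree at some `x ≥ 1` and `x + d`. Hence,
for `A = k ^ m` and for `A = l ^ n`, the block of `c` of length `A` at `A * x` reappears `d * A`
places further on. Independence yields powers `A` and `A + D` with `D / A` arbitrarily small;
comparing their two translations shows that `c` has the period `d * D` on a window of length close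
to `A`. A uniformly recurrent automatic sequence is linearly recurrent, so this window contains
every factor of length `d * D + 1` as soon as `D / A` is small enough, and the period is global.
-/

/-! ### Factors and recurrence -/

section Factors

variable {Ω : Type*} {a b c : ℕ → Ω}

lemma prefixWord_succ (c : ℕ → Ω) (n : ℕ) : prefixWord c (n + 1) = prefixWord c n ++ [c n] := by
  simp [prefixWord, List.range_succ]

@[simp]
lemma length_prefixWord (c : ℕ → Ω) (n : ℕ) : (prefixWord c n).length = n := by
  simp [prefixWord]

lemma occursAt_prefixWord {n i : ℕ} :
    OccursAt a (prefixWord c n) i ↔ ∀ j < n, a (i + j) = c j := by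
  simp [OccursAt, prefixWord, eq_comm]

lemma isFactor_prefixWord_shift (a : ℕ → Ω) (i n : ℕ) :
    IsFactor a (prefixWord (fun j => a (i + j)) n) :=
  ⟨i, occursAt_prefixWord.mpr fun _ _ => rfl⟩

lemma OccursAt.of_eq_on {w : List Ω} {i i' : ℕ} (h : OccursAt a w i)
    (heq : ∀ j < w.length, b (i' + j) = a (i + j)) : OccursAt b w i' :=
  fun j hj => (h j hj).trans (heq j hj).symm

lemma isFactor_of_forall_prefixWord (hc : ∀ n, IsFactor a (prefixWord c n)) {w : List Ω}
    (hw : IsFactor c w) : IsFactor a w := by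
  obtain ⟨i, hi⟩ := hw
  obtain ⟨p, hp⟩ := hc (i + w.length)
  refine ⟨p + i, hi.of_eq_on fun j hj => ?_⟩
  rw [add_assoc, occursAt_prefixWord.mp hp _ (by omega)]

lemma UniformlyRecurrent.exists_gap_of_isFactor_imp (ha : UniformlyRecurrent a)
    (hca : ∀ w, IsFactor c w → IsFactor a w) {w : List Ω} (hw : IsFactor a w) :
    ∃ C, ∀ N, ∃ i, N ≤ i ∧ i ≤ N + C ∧ OccursAt c w i := by
  obtain ⟨C, hC⟩ := ha w hw
  refine ⟨C, fun N => ?_⟩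
  obtain ⟨p, hp⟩ := hca _ (isFactor_prefixWord_shift c N (C + w.length))
  obtain ⟨i, hpi, hiC, hi⟩ := hC p
  obtain ⟨s, rfl⟩ := Nat.exists_eq_add_of_le hpi
  refine ⟨N + s, by omega, by omega, hi.of_eq_on fun j hj => ?_⟩
  rw [add_assoc, add_assoc, occursAt_prefixWord.mp hp _ (by omega)]

lemma UniformlyRecurrent.of_isFactor_imp (ha : UniformlyRecurrent a)
    (hca : ∀ w, IsFactor c w → IsFactor a w) : UniformlyRecurrent c :=
  fun w hw => ha.exists_gap_of_isFactor_imp hca (hca w hw)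

lemma UniformlyRecurrent.isFactor_of_isFactor_imp (ha : UniformlyRecurrent a)
    (hca : ∀ w, IsFactor c w → IsFactor a w) {w : List Ω} (hw : IsFactor a w) :
    IsFactor c w :=
  let ⟨_, hC⟩ := ha.exists_gap_of_isFactor_imp hca hw
  let ⟨i, _, _, hi⟩ := hC 0
  ⟨i, hi⟩

lemma periodic_of_forall_occursAt {q : ℕ}
    (h : ∀ w, IsFactor b w → w.length = q + 1 → ∃ i, OccursAt a w i ∧ a (i + q) = a i) :
    Function.Periodic b q := by
  intro n
  obtain ⟨i, hi, hq⟩ := h _ (isFactor_prefixWord_shift b n (q + 1)) (length_prefixWord _ _)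
  rw [occursAt_prefixWord] at hi
  calc b (n + q) = a (i + q) := (hi q (by omega)).symm
    _ = a i := hq
    _ = b n := hi 0 (by omega)

lemma periodic_of_isFactor_imp (hba : ∀ w, IsFactor b w → IsFactor a w) {q : ℕ}
    (ha : Function.Periodic a q) : Function.Periodic b q :=
  periodic_of_forall_occursAt fun w hw _ => (hba w hw).imp fun i hi => ⟨hi, ha i⟩

/-- Linear recurrence with constant `K`: a factor `w` occurs with gaps at most `K * |w|`, measured
between starting positions. This quantitative form of uniform recurrence is what makes a local
period on a long window global. -/
def LinearlyRecurrent (K : ℕ) (c : ℕ → Ω) : Prop :=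
  ∀ w, IsFactor c w → ∀ N, ∃ i, N ≤ i ∧ i ≤ N + K * w.length ∧ OccursAt c w i

lemma LinearlyRecurrent.periodic_of_window {K : ℕ} (hc : LinearlyRecurrent K c) {p N : ℕ}
    (h : ∀ i, N ≤ i → i ≤ N + K * (p + 1) → c (i + p) = c i) : Function.Periodic c p := by
  refine periodic_of_forall_occursAt (a := c) fun w hw hlen => ?_
  obtain ⟨i, hNi, hiK, hi⟩ := hc w hw N
  exact ⟨i, hi, h i hNi (hlen ▸ hiK)⟩

end Factors

/-! ### Automatic sequences -/

section Automatic

/-- A sequence of states is `k`-self-similar if its value at `j` determines its values at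
`k * j, …, k * j + k - 1`, like the sequence of states reached by an automaton that reads base-`k`
representations. The index `0` is excluded because these have no leading zeros. -/
def IsSelfSimilar {S : Type*} (k : ℕ) (f : ℕ → S) : Prop :=
  ∀ i j r : ℕ, 1 ≤ i → 1 ≤ j → r < k → f i = f j → f (k * i + r) = f (k * j + r)

variable {Ω S : Type*} {k : ℕ} {f : ℕ → S}

lemma map_val_kRepr (hk : 1 < k) (n : ℕ) :
    (kRepr k n).map Fin.val = (Nat.digits k n).reverse := by
  simp [kRepr, hk, List.map_pmap]

lemma kRepr_mul_add (hk : 1 < k) {j : ℕ} (hj : 1 ≤ j) (r : Fin k) :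
    kRepr k (k * j + r) = kRepr k j ++ [r] := by
  apply List.map_injective_iff.mpr Fin.val_injective
  rw [List.map_append, map_val_kRepr hk, map_val_kRepr hk, add_comm,
    Nat.digits_add k hk r j r.isLt (Or.inr (by omega))]
  simp

lemma run_kRepr_mul_add (hk : 1 < k) (δ : S → Fin k → S) (s : S) {j : ℕ} (hj : 1 ≤ j)
    (r : Fin k) : run δ s (kRepr k (k * j + r)) = δ (run δ s (kRepr k j)) r := by
  simp [kRepr_mul_add hk hj, run]

lemma IsAutomatic.exists_isSelfSimilar (hk : 1 < k) {c : ℕ → Ω} (hc : IsAutomatic k c) :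
    ∃ (S : Type) (_ : Finite S) (f : ℕ → S) (τ : S → Ω), IsSelfSimilar k f ∧ c = τ ∘ f := by
  obtain ⟨S, _, δ, s₀, τ, h⟩ := hc
  refine ⟨S, inferInstance, fun n => run δ s₀ (kRepr k n), τ, fun i j r hi hj hr hij => ?_,
    funext h⟩
  simp only [run_kRepr_mul_add hk δ s₀ hi ⟨r, hr⟩, run_kRepr_mul_add hk δ s₀ hj ⟨r, hr⟩, hij]

lemma IsAutomatic.finite_range {c : ℕ → Ω} (hc : IsAutomatic k c) : (Set.range c).Finite := by
  obtain ⟨S, _, δ, s₀, τ, h⟩ := hc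
  refine (Set.finite_range τ).subset ?_
  rintro _ ⟨n, rfl⟩
  exact ⟨_, (h n).symm⟩

lemma IsSelfSimilar.pow (hf : IsSelfSimilar k f) (m : ℕ) : IsSelfSimilar (k ^ m) f := by
  induction m with
  | zero =>
    intro i j r _ _ hr hij
    obtain rfl : r = 0 := by simpa using hr
    simpa using hij
  | succ m ih =>
    intro i j r hi hj hr hij
    rw [pow_succ] at hr
    have hkm : 0 < k ^ m := Nat.pos_of_mul_pos_right (by omega : 0 < k ^ m * k)
    have hk : 0 < k := Nat.pos_of_mul_pos_left (by omega : 0 < k ^ m * k)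
    have hsplit : ∀ q, k ^ (m + 1) * q + r = k * (k ^ m * q + r / k) + r % k := by
      intro q
      conv_lhs => rw [← Nat.div_add_mod r k]
      ring
    rw [hsplit i, hsplit j]
    exact hf _ _ _ (le_add_right (Nat.mul_pos hkm hi)) (le_add_right (Nat.mul_pos hkm hj))
      (Nat.mod_lt _ hk) (ih _ _ _ hi hj ((Nat.div_lt_iff_lt_mul hk).mpr hr) hij)

lemma IsSelfSimilar.eq_of_lt_two_mul (hf : IsSelfSimilar k f) {i j t : ℕ} (hi : 1 ≤ i)
    (hj : 1 ≤ j) (ht : t < 2 * k) (h₀ : f i = f j) (h₁ : f (i + 1) = f (j + 1)) :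
    f (k * i + t) = f (k * j + t) := by
  rcases lt_or_ge t k with htk | hkt
  · exact hf i j t hi hj htk h₀
  · obtain ⟨r, rfl⟩ := Nat.exists_eq_add_of_le hkt
    simpa only [mul_add, mul_one, add_assoc] using
      hf (i + 1) (j + 1) r (by omega) (by omega) (by omega) h₁

lemma OccursAt.of_isSelfSimilar (hf : IsSelfSimilar k f) {τ : S → Ω} {w : List Ω} {i j v : ℕ}
    (hocc : OccursAt (τ ∘ f) w (k * i + v)) (hw : w.length ≤ k) (hv : v < k) (hi : 1 ≤ i)
    (hj : 1 ≤ j) (h₀ : f i = f j) (h₁ : f (i + 1) = f (j + 1)) :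
    OccursAt (τ ∘ f) w (k * j + v) := by
  refine hocc.of_eq_on fun t ht => congrArg τ ?_
  rw [add_assoc, add_assoc]
  exact (hf.eq_of_lt_two_mul hi hj (by omega) h₀ h₁).symm

/-- For fixed `e`, consider the set of triples `(f j, f q, f (q + 1))` with `q` and `q + 1` in
`[k ^ e * j, k ^ e * (j + 1))`. It takes only finitely many values as `e` varies, so one of them
recurs for arbitrarily large `e`. -/
lemma IsSelfSimilar.exists_adjacent_values_eq [Finite S] (hf : IsSelfSimilar k f) :
    ∃ E, ∀ B, ∃ e > B, ∀ j q, 1 ≤ j → k ^ e * j ≤ q → q + 1 < k ^ e * (j + 1) →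
      ∃ q', k ^ E * j ≤ q' ∧ q' + 1 < k ^ E * (j + 1) ∧ f q = f q' ∧ f (q + 1) = f (q' + 1) := by
  let triples : ℕ → Set (S × S × S) := fun e =>
    {x | ∃ j q, 1 ≤ j ∧ k ^ e * j ≤ q ∧ q + 1 < k ^ e * (j + 1) ∧ x = (f j, f q, f (q + 1))}
  obtain ⟨P, hP⟩ := Finite.exists_infinite_fiber triples
  have hinf : (triples ⁻¹' {P}).Infinite := Set.infinite_coe_iff.mp hP
  obtain ⟨E, hE⟩ := hinf.nonempty
  refine ⟨E, fun B => ?_⟩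
  obtain ⟨e, he, hBe⟩ := hinf.exists_gt B
  refine ⟨e, hBe, fun j q hj hjq hqj => ?_⟩
  have htriples : triples e = triples E := Eq.trans he (Eq.symm hE)
  have hmem : (f j, f q, f (q + 1)) ∈ triples E := htriples ▸ ⟨j, q, hj, hjq, hqj, rfl⟩
  obtain ⟨j', q', hj', hjq', hqj', heq⟩ := hmem
  simp only [Prod.mk.injEq] at heq
  obtain ⟨hfj, hfq, hfq'⟩ := heq
  obtain ⟨r, rfl⟩ := Nat.exists_eq_add_of_le hjq'
  rw [mul_add, mul_one] at hqj'
  refine ⟨k ^ E * j + r, by omega, by rw [mul_add, mul_one]; omega, ?_, ?_⟩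
  · exact hfq.trans (hf.pow E j' j r hj' hj (by omega) hfj.symm)
  · exact hfq'.trans (hf.pow E j' j (r + 1) hj' hj (by omega) hfj.symm)

lemma UniformlyRecurrent.exists_occursAt_adic [Finite S] (hk : 1 < k) (hf : IsSelfSimilar k f)
    {τ : S → Ω} (hrec : UniformlyRecurrent (τ ∘ f)) :
    ∃ E, ∀ m w, IsFactor (τ ∘ f) w → w.length ≤ k ^ m → ∀ j, 1 ≤ j →
      ∃ i, k ^ (m + E) * j ≤ i ∧ i ≤ k ^ (m + E) * (j + 1) ∧ OccursAt (τ ∘ f) w i := by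
  obtain ⟨E, hE⟩ := hf.exists_adjacent_values_eq
  refine ⟨E, fun m w hw hlen j hj => ?_⟩
  obtain ⟨C, hC⟩ := hrec w hw
  obtain ⟨e, he, hadj⟩ := hE (C + 1)
  have hpos : ∀ n, 1 ≤ k ^ n := fun n => Nat.one_le_pow _ _ (by omega)
  obtain ⟨i, hi, hiC, hocc⟩ := hC (k ^ m * (k ^ e * j))
  have hq : k ^ e * j ≤ i / k ^ m := (Nat.le_div_iff_mul_le (hpos m)).mpr (by linarith)
  have hq' : i / k ^ m + 1 < k ^ e * (j + 1) := by
    have hCe : C + 1 < k ^ e := he.trans (Nat.lt_pow_self hk)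
    have hdiv : i / k ^ m ≤ k ^ e * j + C := by
      refine Nat.div_le_of_le_mul (hiC.trans ?_)
      rw [mul_add]
      exact Nat.add_le_add_left (Nat.le_mul_of_pos_left C (hpos m)) _
    rw [mul_add, mul_one]
    omega
  obtain ⟨q', hjq', hqj', h₀, h₁⟩ := hadj j _ hj hq hq'
  have hv : i % k ^ m < k ^ m := Nat.mod_lt _ (hpos m)
  refine ⟨k ^ m * q' + i % k ^ m, ?_, ?_, ?_⟩
  · calc k ^ (m + E) * j = k ^ m * (k ^ E * j) := by ring
      _ ≤ k ^ m * q' := Nat.mul_le_mul_left _ hjq'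
      _ ≤ _ := Nat.le_add_right _ _
  · calc k ^ m * q' + i % k ^ m ≤ k ^ m * (q' + 1) := by rw [mul_add, mul_one]; omega
      _ ≤ k ^ m * (k ^ E * (j + 1)) := Nat.mul_le_mul_left _ hqj'.le
      _ = _ := by ring
  · rw [← Nat.div_add_mod i (k ^ m)] at hocc
    exact hocc.of_isSelfSimilar (hf.pow m) hlen hv ((Nat.mul_pos (hpos e) hj).trans_le hq)
      ((Nat.mul_pos (hpos E) hj).trans_le hjq') h₀ h₁

theorem UniformlyRecurrent.exists_linearlyRecurrent (hk : 1 < k) {c : ℕ → Ω}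
    (hc : IsAutomatic k c) (hrec : UniformlyRecurrent c) : ∃ K, LinearlyRecurrent K c := by
  obtain ⟨S, _, f, τ, hf, rfl⟩ := hc.exists_isSelfSimilar hk
  obtain ⟨E, hE⟩ := hrec.exists_occursAt_adic hk hf
  refine ⟨2 * k ^ (E + 1), fun w hw N => ?_⟩
  rcases Nat.eq_zero_or_pos w.length with hlen | hlen
  · exact ⟨N, le_rfl, Nat.le_add_right _ _, fun j hj => absurd hj (by omega)⟩
  let m := Nat.log k w.length + 1
  obtain ⟨Q, hQ⟩ : ∃ Q, k ^ (m + E) = Q := ⟨_, rfl⟩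
  have hQpos : 0 < Q := hQ ▸ by positivity
  have hQlen : Q ≤ k ^ (E + 1) * w.length := by
    calc Q = k ^ (E + 1) * k ^ Nat.log k w.length := by rw [← hQ, ← pow_add]; congr 1; lia
      _ ≤ _ := Nat.mul_le_mul_left _ (Nat.pow_log_le_self k hlen.ne')
  obtain ⟨i, hi, hi', hocc⟩ :=
    hE m w hw (Nat.lt_pow_succ_log_self hk _).le (N / Q + 1) (Nat.le_add_left _ _)
  rw [hQ] at hi hi'
  refine ⟨i, (Nat.lt_mul_div_succ N hQpos).le.trans hi, ?_, hocc⟩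
  calc i ≤ Q * (N / Q + 1 + 1) := hi'
    _ = Q * (N / Q) + 2 * Q := by ring
    _ ≤ N + 2 * (k ^ (E + 1) * w.length) := by gcongr; exact Nat.mul_div_le N Q
    _ = N + 2 * k ^ (E + 1) * w.length := by ring

end Automatic

/-! ### Powers of multiplicatively independent integers -/

lemma exists_nat_abs_mul_sub_mul_lt {x y ε : ℝ} (hx : 0 ≤ x) (hy : 0 < y) (hε : 0 < ε) :
    ∃ m n : ℕ, 0 < m ∧ |m * x - n * y| < ε := by
  obtain ⟨N, hN⟩ := exists_nat_gt (y / ε)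
  have hN0 : 0 < N := by exact_mod_cast (by positivity : 0 < y / ε).trans hN
  obtain ⟨m, hm, -, hround⟩ := Real.exists_nat_abs_mul_sub_round_le (x / y) hN0
  have hnonneg : 0 ≤ round (m * (x / y)) := by
    rw [round_eq]
    positivity
  lift round (m * (x / y)) to ℕ using hnonneg with n
  rw [Int.cast_natCast] at hround
  refine ⟨m, n, hm, ?_⟩
  calc |m * x - n * y| = |m * (x / y) - n| * y := by
        rw [← abs_of_pos hy, ← abs_mul, abs_of_pos hy]
        field_simp
    _ ≤ 1 / (N + 1) * y := by gcongr
    _ < ε := by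
        rw [div_lt_iff₀ hε] at hN
        rw [one_div_mul_eq_div, div_lt_iff₀ (by positivity)]
        linarith

lemma mul_le_of_abs_log_sub_log_lt {A D H : ℕ} (hA : 0 < A)
    (h : |Real.log (A + D : ℕ) - Real.log A| < Real.log (1 + 1 / (H + 1))) : H * D ≤ A := by
  have hA' : (0 : ℝ) < A := by exact_mod_cast hA
  rw [← Real.log_div (by positivity) hA'.ne'] at h
  have hlt := (Real.log_lt_log_iff (by positivity) (by positivity)).mp ((le_abs_self _).trans_lt h)
  rw [Nat.cast_add, add_div, div_self hA'.ne', add_lt_add_iff_left,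
    div_lt_div_iff₀ hA' (by positivity), one_mul] at hlt
  have hnat : D * (H + 1) < A := by exact_mod_cast hlt
  linarith

lemma MultIndep.exists_pow_add_eq_pow {k l : ℕ} (hind : MultIndep k l) (hk : 1 < k) (hl : 1 < l)
    (H : ℕ) : ∃ m n D : ℕ, 0 < D ∧
      (k ^ m + D = l ^ n ∧ H * D ≤ k ^ m ∨ l ^ n + D = k ^ m ∧ H * D ≤ l ^ n) := by
  obtain ⟨m, n, hm, hlog⟩ := exists_nat_abs_mul_sub_mul_lt (x := Real.log k) (y := Real.log l)
    (ε := Real.log (1 + 1 / (H + 1))) (Real.log_natCast_nonneg k)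
    (Real.log_pos (by exact_mod_cast hl)) (Real.log_pos (lt_add_of_pos_right _ (by positivity)))
  rw [← Real.log_pow, ← Real.log_pow, ← Nat.cast_pow, ← Nat.cast_pow] at hlog
  have hne : k ^ m ≠ l ^ n := fun h => hm.ne' (hind m n h).1
  rcases hne.lt_or_gt with h | h
  · obtain ⟨D, hD⟩ := Nat.exists_eq_add_of_le h.le
    rw [abs_sub_comm, hD] at hlog
    exact ⟨m, n, D, by omega, Or.inl ⟨hD.symm,
      mul_le_of_abs_log_sub_log_lt (by positivity) hlog⟩⟩
  · obtain ⟨D, hD⟩ := Nat.exists_eq_add_of_le h.le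
    rw [hD] at hlog
    exact ⟨m, n, D, by omega, Or.inr ⟨hD.symm,
      mul_le_of_abs_log_sub_log_lt (by positivity) hlog⟩⟩

/-! ### Cobham's theorem for uniformly recurrent sequences -/

section Cobham

variable {Ω S : Type*} {c : ℕ → Ω}

lemma exists_pos_add_eq [Finite S] (f : ℕ → S) : ∃ x d, 1 ≤ x ∧ 1 ≤ d ∧ f (x + d) = f x := by
  obtain ⟨x, hx, y, -, hxy, hf⟩ := (Set.Ici_infinite 1).exists_lt_map_eq_of_mapsTo
    (Set.mapsTo_univ f _) Set.finite_univ
  exact ⟨x, y - x, hx, by omega, by rw [Nat.add_sub_cancel' hxy.le, hf]⟩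

lemma IsSelfSimilar.shift_eq {A x d : ℕ} {f : ℕ → S} (hf : IsSelfSimilar A f) (hx : 1 ≤ x)
    (hfx : f (x + d) = f x) : ∀ i < A, f (A * x + i + d * A) = f (A * x + i) := by
  intro i hi
  rw [← hf (x + d) x i (by omega) hx hi hfx]
  ring_nf

/-- Composing one translation with the inverse of the other gives the period `d * D` on the
window that starts at `(A + D) * x + d * A` and has length `A - D * x`. -/
lemma LinearlyRecurrent.periodic_of_close_shifts {K : ℕ} (hc : LinearlyRecurrent K c)
    {x d A D : ℕ} (hd : 1 ≤ d) (hD : 1 ≤ D) (hclose : (x + 2 * K * d + 1) * D ≤ A)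
    (hA : ∀ i < A, c (A * x + i + d * A) = c (A * x + i))
    (hAD : ∀ i < A + D, c ((A + D) * x + i + d * (A + D)) = c ((A + D) * x + i)) :
    Function.Periodic c (d * D) := by
  refine hc.periodic_of_window (N := (A + D) * x + d * A) fun i hi hiK => ?_
  obtain ⟨s, rfl⟩ := Nat.exists_eq_add_of_le hi
  have hs : D * x + s < A := by
    calc D * x + s ≤ D * x + K * (d * D + 1) := by omega
      _ ≤ D * x + K * (d * D + d * D) := by gcongr; exact Nat.mul_pos hd hD
      _ < (x + 2 * K * d + 1) * D := by linarith
      _ ≤ A := hclose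
  calc c ((A + D) * x + d * A + s + d * D) = c ((A + D) * x + s + d * (A + D)) := by ring_nf
    _ = c ((A + D) * x + s) := hAD s (by omega)
    _ = c (A * x + (D * x + s)) := by ring_nf
    _ = c (A * x + (D * x + s) + d * A) := (hA _ hs).symm
    _ = c ((A + D) * x + d * A + s) := by ring_nf

theorem UniformlyRecurrent.exists_periodic_of_isAutomatic {k l : ℕ} (hk : 1 < k) (hl : 1 < l)
    (hind : MultIndep k l) (hck : IsAutomatic k c) (hcl : IsAutomatic l c)
    (hrec : UniformlyRecurrent c) : ∃ q, 1 ≤ q ∧ Function.Periodic c q := by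
  obtain ⟨K, hK⟩ := hrec.exists_linearlyRecurrent hk hck
  obtain ⟨S, _, f, τ, hf, hcf⟩ := hck.exists_isSelfSimilar hk
  obtain ⟨T, _, g, σ, hg, hcg⟩ := hcl.exists_isSelfSimilar hl
  obtain ⟨x, d, hx, hd, hfg⟩ := exists_pos_add_eq fun n => (f n, g n)
  obtain ⟨hfx, hgx⟩ := Prod.mk.inj hfg
  have hshift_k : ∀ m, ∀ i < k ^ m, c (k ^ m * x + i + d * k ^ m) = c (k ^ m * x + i) :=
    fun m i hi => hcf ▸ congrArg τ ((hf.pow m).shift_eq hx hfx i hi)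
  have hshift_l : ∀ n, ∀ i < l ^ n, c (l ^ n * x + i + d * l ^ n) = c (l ^ n * x + i) :=
    fun n i hi => hcg ▸ congrArg σ ((hg.pow n).shift_eq hx hgx i hi)
  obtain ⟨m, n, D, hD, ⟨heq, hclose⟩ | ⟨heq, hclose⟩⟩ :=
    hind.exists_pow_add_eq_pow hk hl (x + 2 * K * d + 1)
  · exact ⟨d * D, Nat.mul_pos hd hD,
      hK.periodic_of_close_shifts hd hD hclose (hshift_k m) (heq ▸ hshift_l n)⟩
  · exact ⟨d * D, Nat.mul_pos hd hD,
      hK.periodic_of_close_shifts hd hD hclose (hshift_l n) (heq ▸ hshift_k m)⟩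

end Cobham

/-! ### The minimal word -/

section MinWord

variable {Ω : Type*}

lemma exists_forall_eq_prefixWord (next : List Ω → Ω) :
    ∃ c : ℕ → Ω, ∀ n, c n = next (prefixWord c n) := by
  let W : ℕ → List Ω := fun n => (fun w => w ++ [next w])^[n] []
  have hW_succ : ∀ n, W (n + 1) = W n ++ [next (W n)] :=
    fun n => Function.iterate_succ_apply' _ n []
  have hW : ∀ n, prefixWord (fun n => next (W n)) n = W n := by
    intro n
    induction n with
    | zero => rfl
    | succ n ih => rw [prefixWord_succ, ih, hW_succ]
  exact ⟨fun n => next (W n), fun n => congrArg next (hW n).symm⟩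

lemma exists_lt_of_lex_prefixWord [LT Ω] {c : ℕ → Ω} {w : List Ω}
    (h : List.Lex (· < ·) w (prefixWord c w.length)) :
    ∃ i, ∃ hi : i < w.length, (∀ (j : ℕ) (hj : j < i), w[j] = c j) ∧ w[i] < c i := by
  rcases List.lt_iff_exists.mp h with ⟨-, hlen⟩ | ⟨i, hi, _, heq, hlt⟩
  · simp at hlen
  · exact ⟨i, hi, by simpa [prefixWord] using heq, by simpa [prefixWord] using hlt⟩

variable [LinearOrder Ω] {a b c : ℕ → Ω}

lemma exists_least_next_letter (ha : (Set.range a).Finite) (w : List Ω) (hw : IsFactor a w) :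
    ∃ p, OccursAt a w p ∧ ∀ p', OccursAt a w p' → a (p + w.length) ≤ a (p' + w.length) := by
  let nextLetters := (fun p => a (p + w.length)) '' {p | OccursAt a w p}
  have hfin : nextLetters.Finite := ha.subset (by rintro _ ⟨p, -, rfl⟩; exact ⟨_, rfl⟩)
  have hne : nextLetters.Nonempty := Set.Nonempty.image _ hw
  obtain ⟨_, ⟨p, hp, rfl⟩, hmin⟩ := Set.exists_min_image nextLetters id hfin hne
  exact ⟨p, hp, fun p' hp' => hmin _ ⟨p', hp', rfl⟩⟩

/-- The minimal word is built greedily: each letter is the least one that follows an occurrence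
of the prefix constructed so far. -/
lemma exists_isMinWord (ha : (Set.range a).Finite) : ∃ c, IsMinWord a c := by
  choose! pos hpos hmin using exists_least_next_letter ha
  obtain ⟨c, hc⟩ := exists_forall_eq_prefixWord fun w => a (pos w + w.length)
  simp only [length_prefixWord] at hc
  have hfac : ∀ n, IsFactor a (prefixWord c n) := by
    intro n
    induction n with
    | zero => exact ⟨0, occursAt_prefixWord.mpr fun j hj => absurd hj j.not_lt_zero⟩
    | succ n ih =>
      have hocc := occursAt_prefixWord.mp (hpos _ ih)
      refine ⟨pos (prefixWord c n), occursAt_prefixWord.mpr fun j hj => ?_⟩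
      rcases Nat.lt_succ_iff_lt_or_eq.mp hj with hj | rfl
      · exact hocc j hj
      · exact (hc j).symm
  refine ⟨c, fun n => ⟨hfac n, ?_⟩⟩
  rintro w rfl ⟨p, hp⟩ hlex
  obtain ⟨i, hi, heq, hlt⟩ := exists_lt_of_lex_prefixWord hlex
  have hocc : OccursAt a (prefixWord c i) p :=
    occursAt_prefixWord.mpr fun j hj => (hp j (hj.trans hi)).symm.trans (heq j hj)
  have hle : c i ≤ a (p + i) := by
    simpa only [length_prefixWord, ← hc] using hmin _ (hfac i) p hocc
  exact absurd hle (not_le.mpr (hp i hi ▸ hlt))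

lemma IsMinWord.of_isFactor_iff (hc : IsMinWord a c) (hab : ∀ w, IsFactor a w ↔ IsFactor b w) :
    IsMinWord b c :=
  fun n => ⟨(hab _).mp (hc n).1, fun w hw hwb => (hc n).2 w hw ((hab w).mpr hwb)⟩

lemma IsMinWord.isFactor_imp (hc : IsMinWord a c) (w : List Ω) (hw : IsFactor c w) :
    IsFactor a w :=
  isFactor_of_forall_prefixWord (fun n => (hc n).1) hw

end MinWord

theorem weak_fagnot_general {Ω : Type*} [LinearOrder Ω]
    {k l : ℕ} (hk : 2 ≤ k) (hl : 2 ≤ l) (hind : MultIndep k l)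
    {a b : ℕ → Ω} (ha : IsAutomatic k a) (hb : IsAutomatic l b)
    (hlang : ∀ w : List Ω, IsFactor a w ↔ IsFactor b w) (hua : UniformlyRecurrent a)
    (ars : ∀ k' : ℕ, 2 ≤ k' → ∀ x c : ℕ → Ω, IsAutomatic k' x → IsMinWord x c →
      IsAutomatic k' c) :
    ∃ q : ℕ, 1 ≤ q ∧ Function.Periodic a q ∧ Function.Periodic b q := by
  obtain ⟨c, hac⟩ := exists_isMinWord ha.finite_range
  have hck : IsAutomatic k c := ars k hk a c ha hac
  have hcl : IsAutomatic l c := ars l hl b c hb (hac.of_isFactor_iff hlang)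
  have huc : UniformlyRecurrent c := hua.of_isFactor_imp hac.isFactor_imp
  obtain ⟨q, hq, hcq⟩ := huc.exists_periodic_of_isAutomatic hk hl hind hck hcl
  have haq : Function.Periodic a q :=
    periodic_of_isFactor_imp (fun _ => hua.isFactor_of_isFactor_imp hac.isFactor_imp) hcq
  exact ⟨q, hq, haq, periodic_of_isFactor_imp (fun w => (hlang w).mpr) haq⟩

/-- Weak form of Fagnot's theorem: if `k, l ≥ 2` are multiplicatively independent,
`a` is `k`-automatic, `b` is `l`-automatic, `ℒ(a) = ℒ(b)`, and `a`, `b` are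
uniformly recurrent, then `a` and `b` are periodic. One may assume as input the
Allouche–Rampersad–Shallit theorem (for a `k`-automatic `a`, the word `min(a)` is
`k`-automatic) and the Morse–Hedlund-type fact that a sequence with a bounded
number of factors of each length is ultimately periodic. -/
theorem weak_fagnot {Ω : Type} [Fintype Ω] [LinearOrder Ω]
    (k l : ℕ) (hk : 2 ≤ k) (hl : 2 ≤ l) (hind : MultIndep k l)
    (a b : ℕ → Ω) (ha : IsAutomatic k a) (hb : IsAutomatic l b)
    (hlang : ∀ w : List Ω, IsFactor a w ↔ IsFactor b w)
    (hua : UniformlyRecurrent a) (hub : UniformlyRecurrent b)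
    (ars : ∀ (k' : ℕ), 2 ≤ k' → ∀ x c : ℕ → Ω, IsAutomatic k' x → IsMinWord x c →
      IsAutomatic k' c)
    (mh : ∀ x : ℕ → Ω,
      (∃ B : ℕ, ∀ n : ℕ, Set.ncard {w : List Ω | w.length = n ∧ IsFactor x w} ≤ B) →
      ∃ q : ℕ, 1 ≤ q ∧ ∃ N : ℕ, ∀ n : ℕ, N ≤ n → x (n + q) = x n) :
    (∃ q : ℕ, 1 ≤ q ∧ ∀ n : ℕ, a (n + q) = a n) ∧
    (∃ q : ℕ, 1 ≤ q ∧ ∀ n : ℕ, b (n + q) = b n) := by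
  obtain ⟨q, hq, haq, hbq⟩ := weak_fagnot_general hk hl hind ha hb hlang hua ars
  exact ⟨⟨q, hq, haq⟩, ⟨q, hq, hbq⟩⟩
end

section
/- Let a, b : ℕ → Ω be sequences with values in a finite set Ω. If a and b coincide almost everywhere and both a and b are uniformly recurrent, then ℒ(a) = ℒ(b), i.e., a and b have exactly the same factors. -/
open Filter

/-!
If a factor `w` of a uniformly recurrent sequence `a` is not a factor of `b`, then every occurrence
of `w` in `a` contains a position where `a` and `b` differ. These occurrences have bounded gaps, so
the set of differences is syndetic, and a set meeting every interval of length `L` has upper density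
at least `1 / L`.
-/

/-- A set of natural numbers is syndetic (relatively dense) if it meets every interval of some
fixed length. -/
def IsSyndetic (D : Set ℕ) : Prop :=
  ∃ L : ℕ, ∀ N : ℕ, (D ∩ Set.Ico N (N + L)).Nonempty

theorem le_ncard_inter_Iio_mul {D : Set ℕ} {L : ℕ}
    (hD : ∀ N, (D ∩ Set.Ico N (N + L)).Nonempty) (k : ℕ) :
    k ≤ (D ∩ Set.Iio (k * L)).ncard := by
  have hfin : (D ∩ Set.Iio (k * L)).Finite := (Set.finite_Iio _).inter_of_right D
  have hsurj : Set.Iio k ⊆ (· / L) '' (D ∩ Set.Iio (k * L)) := by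
    intro m hm
    obtain ⟨n, hnD, hmn, hnm⟩ := hD (m * L)
    rw [← Nat.succ_mul] at hnm
    exact ⟨n, ⟨hnD, hnm.trans_le (Nat.mul_le_mul_right L hm)⟩, Nat.div_eq_of_lt_le hmn hnm⟩
  calc k = (Set.Iio k).ncard := (Set.ncard_Iio_nat k).symm
    _ ≤ ((· / L) '' (D ∩ Set.Iio (k * L))).ncard := Set.ncard_le_ncard hsurj (hfin.image _)
    _ ≤ (D ∩ Set.Iio (k * L)).ncard := Set.ncard_image_le hfin

theorem le_upperDensity_of_frequently_le {D : Set ℕ} {c : ℝ}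
    (h : ∃ᶠ n : ℕ in atTop, c ≤ ((D ∩ Set.Iio n).ncard : ℝ) / n) :
    c ≤ upperDensity D := by
  refine le_limsup_of_frequently_le h (isBoundedUnder_of ⟨1, fun n => ?_⟩)
  have hcard : (D ∩ Set.Iio n).ncard ≤ n :=
    (Set.ncard_le_ncard Set.inter_subset_right (Set.finite_Iio n)).trans_eq (Set.ncard_Iio_nat n)
  exact div_le_one_of_le₀ (Nat.cast_le.2 hcard) n.cast_nonneg

theorem IsSyndetic.upperDensity_pos {D : Set ℕ} (hD : IsSyndetic D) : 0 < upperDensity D := by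
  obtain ⟨L, hL⟩ := hD
  have hL_pos : 0 < L := by
    obtain ⟨n, -, hn₀, hn⟩ := hL 0
    omega
  have hratio : ∀ k : ℕ, 0 < k →
      (1 / L : ℝ) ≤ ((D ∩ Set.Iio (k * L)).ncard : ℝ) / (k * L : ℕ) := by
    intro k hk
    calc (1 / L : ℝ) = k / (k * L : ℕ) := by push_cast; field_simp
      _ ≤ _ := by gcongr; exact le_ncard_inter_Iio_mul hL k
  have hfreq : ∃ᶠ n : ℕ in atTop, (1 / L : ℝ) ≤ ((D ∩ Set.Iio n).ncard : ℝ) / n :=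
    (tendsto_id.atTop_mul_const' hL_pos).frequently
      ((eventually_gt_atTop 0).mono hratio).frequently
  calc (0 : ℝ) < 1 / L := by positivity
    _ ≤ upperDensity D := le_upperDensity_of_frequently_le hfreq

section Factors

variable {Ω : Type*} {a b : ℕ → Ω} {w : List Ω}

theorem OccursAt.congr {i : ℕ} (h : OccursAt a w i)
    (hab : ∀ n ∈ Set.Ico i (i + w.length), a n = b n) : OccursAt b w i :=
  fun j hj => (h j hj).trans (hab (i + j) ⟨Nat.le_add_right i j, Nat.add_lt_add_left hj i⟩)

theorem UniformlyRecurrent.isSyndetic_ne (ha : UniformlyRecurrent a)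
    (hwa : IsFactor a w) (hwb : ¬ IsFactor b w) : IsSyndetic {n | a n ≠ b n} := by
  obtain ⟨C, hC⟩ := ha w hwa
  refine ⟨C + w.length, fun N => ?_⟩
  obtain ⟨i, hNi, hiC, hi⟩ := hC N
  obtain ⟨n, ⟨hin, hni⟩, hne⟩ : ∃ n ∈ Set.Ico i (i + w.length), a n ≠ b n := by
    by_contra! hab
    exact hwb ⟨i, hi.congr hab⟩
  exact ⟨n, hne, by omega, by omega⟩

theorem UniformlyRecurrent.isFactor_of_not_isSyndetic_ne (ha : UniformlyRecurrent a)
    (hab : ¬ IsSyndetic {n | a n ≠ b n}) (hwa : IsFactor a w) : IsFactor b w :=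
  by_contra fun hwb => hab (ha.isSyndetic_ne hwa hwb)

end Factors

theorem uniformly_recurrent_ae_coincide_lang_eq_general {Ω : Type*} {a b : ℕ → Ω}
    (hab : ¬ IsSyndetic {n | a n ≠ b n})
    (ha : UniformlyRecurrent a) (hb : UniformlyRecurrent b) (w : List Ω) :
    IsFactor a w ↔ IsFactor b w :=
  have hba : ¬ IsSyndetic {n | b n ≠ a n} := by simpa only [ne_comm] using hab
  ⟨ha.isFactor_of_not_isSyndetic_ne hab, hb.isFactor_of_not_isSyndetic_ne hba⟩

/-- Two uniformly recurrent sequences which coincide almost everywhere have the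
same language. -/
theorem uniformly_recurrent_ae_coincide_lang_eq {Ω : Type} [Fintype Ω]
    (a b : ℕ → Ω)
    (hae : upperDensity {n : ℕ | a n ≠ b n} = 0)
    (hua : UniformlyRecurrent a) (hub : UniformlyRecurrent b) :
    ∀ w : List Ω, IsFactor a w ↔ IsFactor b w := by
  have hab : ¬ IsSyndetic {n | a n ≠ b n} := fun h => h.upperDensity_pos.ne' hae
  exact uniformly_recurrent_ae_coincide_lang_eq_general hab hua hub
end

section
/- Let Ω be a finite totally ordered set and let a : ℕ → Ω be uniformly recurrent. Then ℒ(a) = ℒ(min(a)): the set of factors of a equals the set of factors of the infinite word min(a). -/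
open Filter

/- Every factor of `c` lies in a prefix of `c`, and prefixes of `c` are factors of `a`. Conversely,
a factor `w` of `a` with gaps at most `C` occurs in every factor of `a` of length `C + |w|`, in
particular in the prefix of `c` of that length. -/

section PrefixesInLanguage

variable {Ω : Type*} {a c : ℕ → Ω} {w : List Ω}

theorem occursAt_prefixWord_iff {n p : ℕ} :
    OccursAt a (prefixWord c n) p ↔ ∀ j < n, c j = a (p + j) := by
  simp [OccursAt, prefixWord]

theorem occursAt_iff_of_occursAt_prefixWord {n p i : ℕ} (hp : OccursAt a (prefixWord c n) p)
    (hi : i + w.length ≤ n) : OccursAt c w i ↔ OccursAt a w (p + i) := by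
  refine forall₂_congr fun j hj => ?_
  rw [occursAt_prefixWord_iff.mp hp (i + j) (by omega), add_assoc]

theorem IsFactor.of_isFactor_prefixWord (hw : IsFactor c w)
    (hc : ∀ n, IsFactor a (prefixWord c n)) : IsFactor a w := by
  obtain ⟨i, hi⟩ := hw
  obtain ⟨p, hp⟩ := hc (i + w.length)
  exact ⟨p + i, (occursAt_iff_of_occursAt_prefixWord hp le_rfl).mp hi⟩

theorem UniformlyRecurrent.exists_forall_isFactor_of_isFactor_prefixWord
    (ha : UniformlyRecurrent a) (hw : IsFactor a w) :
    ∃ n, ∀ b : ℕ → Ω, IsFactor a (prefixWord b n) → IsFactor b w := by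
  obtain ⟨C, hC⟩ := ha w hw
  refine ⟨C + w.length, fun b ⟨p, hp⟩ => ?_⟩
  obtain ⟨q, hpq, hqC, hq⟩ := hC p
  obtain ⟨i, rfl⟩ := Nat.exists_eq_add_of_le hpq
  exact ⟨i, (occursAt_iff_of_occursAt_prefixWord hp (by omega)).mpr hq⟩

theorem lang_eq_lang_minWord_general (ha : UniformlyRecurrent a)
    (hc : ∀ n, IsFactor a (prefixWord c n)) : ∀ w : List Ω, IsFactor a w ↔ IsFactor c w := by
  refine fun w => ⟨fun hw => ?_, fun hw => hw.of_isFactor_prefixWord hc⟩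
  obtain ⟨n, hn⟩ := ha.exists_forall_isFactor_of_isFactor_prefixWord hw
  exact hn c (hc n)

end PrefixesInLanguage

/-- For a uniformly recurrent sequence `a`, the language of `a` equals the language
of the word `min(a)`. -/
theorem lang_eq_lang_minWord {Ω : Type} [Fintype Ω] [LinearOrder Ω]
    (a : ℕ → Ω) (hua : UniformlyRecurrent a)
    (c : ℕ → Ω) (hc : IsMinWord a c) :
    ∀ w : List Ω, IsFactor a w ↔ IsFactor c w :=
  lang_eq_lang_minWord_general hua fun n => (hc n).1
end
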